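/- Let R be a 3-dimensional regular local ring with m = (x, y, z), and I the ideal of maximal minors of ((x, y, z), (y, z, x²)). For every n ≥ 1, with q = ⌊n/2⌋, one has depth R/(Iⁿ :_R m^q) > 0, and hence the n-th symbolic power satisfies I^{(n)} = Iⁿ :_R m^q. -/

import Mathlib

open IsLocalRing

/-- The `n`-th symbolic power `I⁽ⁿ⁾ = ⋂_{p ∈ Min(R/I)} (IⁿR_p ∩ R)`. -/
noncomputable def symbolicPower {R : Type*} [CommRing R] (I : Ideal R) (n : ℕ) : Ideal R :=
  ⨅ p : I.minimalPrimes,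
    haveI : Ideal.IsPrime (p : Ideal R) := p.2.1.1
    Ideal.comap (algebraMap R (Localization.AtPrime (p : Ideal R)))
      (Ideal.map (algebraMap R (Localization.AtPrime (p : Ideal R))) (I ^ n))

open RingTheory.Sequence

/-!
With `c = y² - xz` and `D ∈ I` the element for which `m D ⊆ I²`, put
`Fₙ = I ^ (n % 2) * (I² + (D)) ^ (n / 2)`, so that `Iⁿ ⊆ Fₙ` and `m ^ (n / 2) * Fₙ ⊆ Iⁿ`. Since
`I² ⊆ c I + (D)`, there is a recurrence `Fₙ₊₁ = c Fₙ + I ^ ((n + 1) % 2) * D ^ ((n + 1) / 2)`.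
As `x, c, D` is a regular sequence and `x` is regular on `R ⧸ I`, the recurrence shows that `x` is
regular on every `R ⧸ Fₙ`. Both `Iⁿ : m ^ (n / 2)` and `I⁽ⁿ⁾` are therefore equal to `Fₙ`.
-/

section RegularSequence

variable {R : Type*} [CommRing R]

theorem isWeaklyRegular_cons_iff_quotient (r : R) (rs : List R) :
    IsWeaklyRegular R (r :: rs) ↔ IsSMulRegular R r ∧
      IsWeaklyRegular (R ⧸ Ideal.span {r}) (rs.map (Ideal.Quotient.mk (Ideal.span {r}))) := by
  have e : QuotSMulTop r R ≃ₗ[R] R ⧸ Ideal.span {r} :=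
    Submodule.quotEquivOfEq _ _ (by simp [← Submodule.ideal_span_singleton_smul])
  rw [isWeaklyRegular_cons_iff, e.isWeaklyRegular_congr,
    ← isWeaklyRegular_map_algebraMap_iff (R ⧸ Ideal.span {r})]
  rfl

theorem isWeaklyRegular_pair_iff {y w : R} :
    IsWeaklyRegular R [y, w] ↔ IsSMulRegular R y ∧ ∀ r, y ∣ w * r → y ∣ r := by
  rw [← List.singleton_append, isWeaklyRegular_append_iff, isWeaklyRegular_singleton_iff,
    isWeaklyRegular_singleton_iff, isSMulRegular_quotient_iff_mem_of_smul_mem]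
  simp [Ideal.mem_span_singleton]

theorem isWeaklyRegular_triple_iff {x y z : R} :
    IsWeaklyRegular R [x, y, z] ↔ IsSMulRegular R x ∧ IsSMulRegular (R ⧸ Ideal.span {x}) y ∧
      IsSMulRegular (R ⧸ Ideal.span {x, y}) z := by
  rw [show [x, y, z] = [x] ++ [y] ++ [z] from rfl, isWeaklyRegular_append_iff,
    isWeaklyRegular_append_iff]
  simp only [isWeaklyRegular_singleton_iff, isSMulRegular_quotient_iff_mem_of_smul_mem, and_assoc]
  simp [Ideal.span_insert]

theorem isWeaklyRegular_pair_pow {y w : R} (h : IsWeaklyRegular R [y, w]) (k l : ℕ) :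
    IsWeaklyRegular R [y ^ k, w ^ l] := by
  obtain ⟨hy, hw⟩ := isWeaklyRegular_pair_iff.1 h
  have hwk (r : R) (hr : y ^ k ∣ w * r) : y ^ k ∣ r := by
    induction k with
    | zero => simp
    | succ k ih =>
      obtain ⟨s, rfl⟩ := ih ((pow_dvd_pow y k.le_succ).trans hr)
      obtain ⟨q, hq⟩ := hr
      have hws : y ^ k • (w * s) = y ^ k • (y * q) := by
        simp only [smul_eq_mul]
        linear_combination hq
      rw [pow_succ]
      exact mul_dvd_mul_left _ (hw s ⟨q, hy.pow k hws⟩)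
  refine isWeaklyRegular_pair_iff.2 ⟨hy.pow k, fun r hr ↦ ?_⟩
  induction l with
  | zero => simpa using hr
  | succ l ih => exact ih (hwk _ (by rwa [← mul_assoc, ← pow_succ']))

theorem isWeaklyRegular_pair_add_mul {y w : R} (h : IsWeaklyRegular R [y, w]) (s : R) :
    IsWeaklyRegular R [y, w + s * y] := by
  obtain ⟨hy, hw⟩ := isWeaklyRegular_pair_iff.1 h
  refine isWeaklyRegular_pair_iff.2 ⟨hy, fun r hr ↦ hw r ?_⟩
  rw [add_mul] at hr
  exact (dvd_add_left (Dvd.intro_left (s * r) (by ring))).1 hr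

theorem exists_eq_mul_of_syzygy {y z s r v : R} (h : IsWeaklyRegular R [y, z])
    (hsyz : s * z ^ 2 - r * (y * z) + v * y ^ 2 = 0) :
    ∃ p q, s = y * p ∧ r = z * p + y * q ∧ v = z * q := by
  obtain ⟨hy, hz⟩ := isWeaklyRegular_pair_iff.1 h
  have cancel {u : R} (hu : y * u = 0) : u = 0 := hy (by simpa using hu)
  obtain ⟨p, rfl⟩ : y ∣ s := hz _ (hz _ ⟨r * z - v * y, by linear_combination hsyz⟩)
  have hsyz' : p * z ^ 2 - r * z + v * y = 0 := cancel (by linear_combination hsyz)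
  obtain ⟨q, hq⟩ : y ∣ r - z * p := hz _ ⟨v, by linear_combination -hsyz'⟩
  have hv : v - z * q = 0 := cancel (by linear_combination hsyz' + z * hq)
  exact ⟨p, q, rfl, by linear_combination hq, sub_eq_zero.1 hv⟩

end RegularSequence

section RegularLocalRing

variable {R : Type*} [CommRing R]

theorem exists_isPrime_ringKrullDim_le_ringKrullDim_quotient [FiniteRingKrullDim R] :
    ∃ Q : Ideal R, Q.IsPrime ∧ ringKrullDim R ≤ ringKrullDim (R ⧸ Q) := by
  let p := LTSeries.longestOf (PrimeSpectrum R)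
  refine ⟨p.head.asIdeal, p.head.isPrime, ?_⟩
  rw [ringKrullDim_quotient, ringKrullDim, Order.krullDim_eq_length_of_finiteDimensionalOrder]
  exact Order.le_krullDim_iff.2 ⟨⟨p.length, fun i ↦ ⟨p i, p.head_le i⟩, fun i ↦ p.step i⟩, rfl⟩

theorem ringKrullDim_quotient_succ_le_of_lt {p q : Ideal R} [q.IsPrime] (h : q < p) :
    ringKrullDim (R ⧸ p) + 1 ≤ ringKrullDim (R ⧸ q) := by
  obtain ⟨r, hrp, hrq⟩ := SetLike.exists_of_lt h
  refine ringKrullDim_succ_le_of_surjective (Ideal.Quotient.factor h.le)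
    (Ideal.Quotient.factor_surjective h.le) (r := Ideal.Quotient.mk q r) ?_ ?_
  · rwa [mem_nonZeroDivisors_iff_ne_zero, Ne, Ideal.Quotient.eq_zero_iff_mem]
  · simpa [Ideal.Quotient.eq_zero_iff_mem] using hrp

variable [IsNoetherianRing R] [IsLocalRing R]

theorem ringKrullDim_le_ringKrullDim_quotient_span_singleton_add_one {r : R}
    (hr : r ∈ maximalIdeal R) : ringKrullDim R ≤ ringKrullDim (R ⧸ Ideal.span {r}) + 1 := by
  simpa using ringKrullDim_le_ringKrullDim_quotient_add_encard {r}
    (by simpa [ringJacobson_eq_maximalIdeal] using hr)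

theorem ringKrullDim_quotient_le_ringKrullDim_quotient_sup_span_singleton_add_one
    (J : Ideal R) {r : R} (hr : r ∈ maximalIdeal R) :
    ringKrullDim (R ⧸ J) ≤ ringKrullDim (R ⧸ J ⊔ Ideal.span {r}) + 1 := by
  have hmk : {Ideal.Quotient.mk J r} ⊆ (Ring.jacobson (R ⧸ J) : Set (R ⧸ J)) := by
    rw [Set.singleton_subset_iff, SetLike.mem_coe, ← Ideal.jacobson_bot,
      ← Ideal.mem_comap, Ideal.comap_jacobson_of_surjective Ideal.Quotient.mk_surjective]
    exact maximalIdeal_le_jacobson _ hr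
  have e := DoubleQuot.quotQuotEquivQuotSup J (Ideal.span {r})
  rw [Ideal.map_span, Set.image_singleton] at e
  rw [← ringKrullDim_eq_of_ringEquiv e]
  simpa using ringKrullDim_le_ringKrullDim_quotient_add_encard _ hmk

theorem isDomain_of_ringKrullDim_quotient_span_singleton_lt {r : R} (hr : r ∈ maximalIdeal R)
    [(Ideal.span {r}).IsPrime]
    (hdim : ringKrullDim (R ⧸ Ideal.span {r}) < ringKrullDim R) : IsDomain R := by
  obtain ⟨Q, hQ, hdimQ⟩ := exists_isPrime_ringKrullDim_le_ringKrullDim_quotient (R := R)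
  have hrQ : r ∉ Q := fun h ↦ by
    have hle := (Ideal.span_singleton_le_iff_mem Q).2 h
    exact (hdim.trans_le hdimQ).not_ge (ringKrullDim_le_of_surjective (Ideal.Quotient.factor hle)
      (Ideal.Quotient.factor_surjective hle))
  have hQr : Q ≤ Ideal.span {r} := by
    by_contra h
    have hlt : Ideal.span {r} < Q ⊔ Ideal.span {r} := right_lt_sup.2 h
    exact hdim.not_ge <| calc
      ringKrullDim R ≤ ringKrullDim (R ⧸ Q) := hdimQ
      _ ≤ ringKrullDim (R ⧸ Q ⊔ Ideal.span {r}) + 1 :=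
        ringKrullDim_quotient_le_ringKrullDim_quotient_sup_span_singleton_add_one Q hr
      _ ≤ ringKrullDim (R ⧸ Ideal.span {r}) := ringKrullDim_quotient_succ_le_of_lt hlt
  have hQ_le : Q ≤ Ideal.span {r} • Q := fun q hq ↦ by
    obtain ⟨s, rfl⟩ := Ideal.mem_span_singleton.1 (hQr hq)
    exact Ideal.mem_span_singleton_mul.2 ⟨s, (hQ.mem_or_mem hq).resolve_left hrQ, rfl⟩
  have hQ_bot : Q = ⊥ := Submodule.eq_bot_of_le_smul_of_le_jacobson_bot (Ideal.span {r}) Q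
    (IsNoetherian.noetherian Q) hQ_le
    ((Ideal.span_singleton_le_iff_mem _).2 (maximalIdeal_le_jacobson ⊥ hr))
  subst hQ_bot
  exact IsDomain.of_bot_isPrime R

theorem ringKrullDim_le_length_of_maximalIdeal_eq {rs : List R}
    (h : maximalIdeal R = Ideal.ofList rs) : ringKrullDim R ≤ rs.length := by
  classical
  calc ringKrullDim R ≤ (maximalIdeal R).spanFinrank := ringKrullDim_le_spanFinrank_maximalIdeal R
    _ ≤ rs.length := by
      have hrs : {r | r ∈ rs} = (rs.toFinset : Set R) := by ext; simp
      rw [h, Ideal.ofList, hrs]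
      exact_mod_cast (Submodule.spanFinrank_span_le_ncard_of_finite (Finset.finite_toSet _)).trans
        ((Set.ncard_coe_finset _).trans_le rs.toFinset_card_le)

-- Joint induction: that `r` is regular comes from `R` being a domain, and that `R` is a domain is
-- lifted from `R ⧸ (r)`.
theorem isDomain_and_isWeaklyRegular_of_length_le_ringKrullDim {R : Type*} [CommRing R]
    [IsNoetherianRing R] [IsLocalRing R] {rs : List R}
    (h : maximalIdeal R = Ideal.ofList rs) (hdim : rs.length ≤ ringKrullDim R) :
    IsDomain R ∧ IsWeaklyRegular R rs := by
  match rs with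
  | [] => exact ⟨(isField_iff_maximalIdeal_eq.2 (by simpa using h)).isDomain, .nil R R⟩
  | r :: rs =>
    have hr : r ∈ maximalIdeal R := h ▸ Ideal.subset_span (by simp)
    let π := Ideal.Quotient.mk (Ideal.span {r})
    have : Nontrivial (R ⧸ Ideal.span {r}) := by
      simpa [Ideal.Quotient.nontrivial_iff, Ideal.span_singleton_eq_top] using hr
    have : IsLocalRing (R ⧸ Ideal.span {r}) := .of_surjective' π Ideal.Quotient.mk_surjective
    have h' : maximalIdeal (R ⧸ Ideal.span {r}) = Ideal.ofList (rs.map π) := by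
      rw [← IsLocalRing.map_maximalIdeal_of_surjective π Ideal.Quotient.mk_surjective, h,
        Ideal.map_ofList]
      simp [π]
    have hdim' : ((rs.map π).length : WithBot ℕ∞) ≤ ringKrullDim (R ⧸ Ideal.span {r}) := by
      have hle := hdim.trans (ringKrullDim_le_ringKrullDim_quotient_span_singleton_add_one hr)
      rw [List.length_cons, Nat.cast_succ] at hle
      rw [List.length_map]
      exact ENat.WithBot.add_le_add_natCast_right_iff.1 hle
    obtain ⟨hdom, hreg⟩ := isDomain_and_isWeaklyRegular_of_length_le_ringKrullDim h' hdim'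
    have hlt : ringKrullDim (R ⧸ Ideal.span {r}) < ringKrullDim R := by
      refine (ringKrullDim_le_length_of_maximalIdeal_eq h').trans_lt (lt_of_lt_of_le ?_ hdim)
      rw [List.length_map, List.length_cons]
      exact_mod_cast rs.length.lt_succ_self
    have : (Ideal.span {r}).IsPrime := (Ideal.Quotient.isDomain_iff_prime _).1 hdom
    have hR : IsDomain R := isDomain_of_ringKrullDim_quotient_span_singleton_lt hr hlt
    have hr0 : r ≠ 0 := by
      rintro rfl
      exact hlt.ne (ringKrullDim_eq_of_ringEquiv
        ((Ideal.quotEquivOfEq (by simp)).trans (RingEquiv.quotientBot R)))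
    exact ⟨hR, (isWeaklyRegular_cons_iff_quotient r rs).2 ⟨.of_ne_zero hr0, hreg⟩⟩
termination_by rs.length

end RegularLocalRing

section SymbolicPower

variable {R : Type*} [CommRing R]

theorem mem_symbolicPower_iff {I : Ideal R} {n : ℕ} {f : R} :
    f ∈ symbolicPower I n ↔ ∀ p ∈ I.minimalPrimes, ∃ s ∉ p, s * f ∈ I ^ n := by
  simp only [symbolicPower, Ideal.mem_iInf, Subtype.forall, Ideal.mem_comap]
  refine forall₂_congr fun p hp ↦ ?_
  have := hp.1.1
  rw [IsLocalization.algebraMap_mem_map_algebraMap_iff p.primeCompl]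
  rfl

theorem mem_radical_colon_of_mem_symbolicPower {I : Ideal R} {x : R}
    (hmin : ∀ p : Ideal R, p.IsPrime → I ≤ p → x ∉ p → p ∈ I.minimalPrimes)
    {n : ℕ} {f : R} (hf : f ∈ symbolicPower I n) : x ∈ ((I ^ n).colon {f}).radical := by
  rw [Ideal.radical_eq_sInf, Ideal.mem_sInf]
  rintro p ⟨hle, hp⟩
  by_contra hxp
  have hIp : I ≤ p := hp.le_of_pow_le (n := n) fun s hs ↦
    hle (Submodule.mem_colon_singleton.2 (Ideal.mul_mem_right _ _ hs))
  obtain ⟨s, hsp, hs⟩ := mem_symbolicPower_iff.1 hf p (hmin p hp hIp hxp)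
  exact hsp (hle (Submodule.mem_colon_singleton.2 hs))

theorem symbolicPower_eq_of_isSMulRegular {I J : Ideal R} {x : R} {n k : ℕ}
    (hxI : IsSMulRegular (R ⧸ I) x)
    (hmin : ∀ p : Ideal R, p.IsPrime → I ≤ p → x ∉ p → p ∈ I.minimalPrimes)
    (hIJ : I ^ n ≤ J) (hxJ : IsSMulRegular (R ⧸ J) x)
    (hJI : ∀ f ∈ J, x ^ k * f ∈ I ^ n) : symbolicPower I n = J := by
  refine le_antisymm (fun f hf ↦ ?_) fun f hf ↦ mem_symbolicPower_iff.2 fun p hp ↦ ?_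
  · obtain ⟨l, hl⟩ := mem_radical_colon_of_mem_symbolicPower hmin hf
    exact mem_of_isSMulRegular_quotient_of_smul_mem (hxJ.pow l)
      (hIJ (Submodule.mem_colon_singleton.1 hl))
  · have hxp : x ∉ p := hxI.notMem_of_mem_minimalPrimes (by rwa [Ideal.annihilator_quotient])
    exact ⟨x ^ k, fun h ↦ hxp (hp.1.1.mem_of_pow_mem _ h), hJI f hf⟩

theorem colon_pow_eq_of_isSMulRegular {I J Q : Ideal R} {x : R} {k : ℕ} (hx : x ∈ Q)
    (hIJ : I ≤ J) (hxJ : IsSMulRegular (R ⧸ J) x) (hQJ : Q ^ k * J ≤ I) :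
    I.colon ((Q ^ k : Ideal R) : Set R) = J := by
  refine le_antisymm (fun f hf ↦ ?_) fun f hf ↦ Submodule.mem_colon.2 fun s hs ↦ ?_
  · refine mem_of_isSMulRegular_quotient_of_smul_mem (hxJ.pow k) (hIJ ?_)
    rw [smul_eq_mul, mul_comm]
    exact Submodule.mem_colon.1 hf _ (Ideal.pow_mem_pow hx k)
  · rw [smul_eq_mul, mul_comm]
    exact hQJ (Ideal.mul_mem_mul hs hf)

theorem mem_minimalPrimes_of_notMem_of_radical_sup_eq [IsNoetherianRing R] [IsLocalRing R]
    {I : Ideal R} {x : R} (hrad : (I ⊔ Ideal.span {x}).radical = maximalIdeal R)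
    {p : Ideal R} (hp : p.IsPrime) (hIp : I ≤ p) (hxp : x ∉ p) : p ∈ I.minimalPrimes := by
  have hx : x ∈ maximalIdeal R :=
    hrad ▸ Ideal.le_radical (Ideal.mem_sup_right (Ideal.mem_span_singleton_self x))
  have hlt : p < maximalIdeal R :=
    (le_maximalIdeal hp.ne_top).lt_of_ne (by rintro rfl; exact hxp hx)
  have hspan : Ideal.span (insert x (I : Set R)) = I ⊔ Ideal.span {x} := by
    rw [Ideal.span_insert, Ideal.span_eq, sup_comm]
  have hmin : maximalIdeal R ∈ (Ideal.span (insert x (I : Set R))).minimalPrimes := by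
    rw [hspan, ← Ideal.radical_minimalPrimes, hrad, Ideal.minimalPrimes_eq_subsingleton_self]
    rfl
  have hI : (I : Set R) ⊆ (Ideal.span (insert x (I : Set R))).radical :=
    (Set.subset_insert x _).trans (Ideal.subset_span.trans Ideal.le_radical)
  simpa using Ideal.mem_minimalPrimes_span_of_mem_minimalPrimes_span_insert hlt x I hmin I hIp hI

end SymbolicPower

section Filtration

variable {R : Type*} [CommRing R]

/-- The degree `n` part of the graded subalgebra of `R[T]` generated by `I * T` and `d * T ^ 2`. -/
def quadraticFiltration (I : Ideal R) (d : R) (n : ℕ) : Ideal R :=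
  I ^ (n % 2) * (I ^ 2 ⊔ Ideal.span {d}) ^ (n / 2)

variable {I : Ideal R} {c d x : R}

theorem pow_le_quadraticFiltration (I : Ideal R) (d : R) (n : ℕ) :
    I ^ n ≤ quadraticFiltration I d n := by
  conv_lhs => rw [← Nat.mod_add_div n 2, pow_add, pow_mul]
  exact Ideal.mul_mono_right (Ideal.pow_right_mono le_sup_left _)

theorem pow_mul_quadraticFiltration_le {Q : Ideal R} (hQ : Q * Ideal.span {d} ≤ I ^ 2) (n : ℕ) :
    Q ^ (n / 2) * quadraticFiltration I d n ≤ I ^ n := by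
  conv_rhs => rw [← Nat.mod_add_div n 2, pow_add, pow_mul]
  rw [quadraticFiltration, mul_left_comm, ← mul_pow, Ideal.mul_sup]
  exact Ideal.mul_mono_right (Ideal.pow_right_mono (sup_le Ideal.mul_le_right hQ) _)

theorem pow_mem_quadraticFiltration (hd : d ∈ I) (n : ℕ) :
    d ^ ((n + 1) / 2) ∈ quadraticFiltration I d n := by
  have hd' : d ∈ I ^ 2 ⊔ Ideal.span {d} := Ideal.mem_sup_right (Ideal.mem_span_singleton_self d)
  have e : (n + 1) / 2 = n % 2 + n / 2 := by omega
  rw [e, pow_add]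
  exact Ideal.mul_mem_mul (Ideal.pow_mem_pow hd _) (Ideal.pow_mem_pow hd' _)

theorem sup_pow_succ_eq (A E : Ideal R) (n : ℕ) :
    (A ⊔ E) ^ (n + 1) = A * (A ⊔ E) ^ n ⊔ E ^ (n + 1) := by
  refine le_antisymm ?_ (sup_le ?_ (Ideal.pow_right_mono le_sup_right _))
  · induction n with
    | zero => simp
    | succ n ih =>
      calc (A ⊔ E) ^ (n + 2) = A * (A ⊔ E) ^ (n + 1) ⊔ E * (A ⊔ E) ^ (n + 1) := by
            rw [pow_succ', Ideal.sup_mul]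
        _ ≤ A * (A ⊔ E) ^ (n + 1) ⊔ E * (A * (A ⊔ E) ^ n ⊔ E ^ (n + 1)) := by gcongr
        _ = A * (A ⊔ E) ^ (n + 1) ⊔ A * (E * (A ⊔ E) ^ n) ⊔ E ^ (n + 2) := by
            rw [Ideal.mul_sup, mul_left_comm, ← pow_succ', sup_assoc]
        _ = A * (A ⊔ E) ^ (n + 1) ⊔ E ^ (n + 2) := by
            rw [← Ideal.mul_sup, pow_succ', ← Ideal.sup_mul, sup_assoc, sup_idem]
  · rw [pow_succ']
    exact Ideal.mul_mono_left le_sup_left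

theorem mul_sup_pow_eq {C I E : Ideal R} (hC : C ≤ I)
    (hI : I ^ 2 ≤ C * I ⊔ E) (n : ℕ) :
    I * (C * I ⊔ E) ^ n = C * (C * I ⊔ E) ^ n ⊔ I * E ^ n := by
  refine le_antisymm ?_ (sup_le (Ideal.mul_mono_left hC)
    (Ideal.mul_mono_right (Ideal.pow_right_mono le_sup_right _)))
  cases n with
  | zero => simp
  | succ n =>
    calc I * (C * I ⊔ E) ^ (n + 1) = C * (I ^ 2 * (C * I ⊔ E) ^ n) ⊔ I * E ^ (n + 1) := by
          rw [sup_pow_succ_eq, Ideal.mul_sup]; ring_nf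
      _ ≤ C * ((C * I ⊔ E) * (C * I ⊔ E) ^ n) ⊔ I * E ^ (n + 1) := by gcongr
      _ = C * (C * I ⊔ E) ^ (n + 1) ⊔ I * E ^ (n + 1) := by rw [← pow_succ']

theorem quadraticFiltration_succ (hc : c ∈ I) (hI : I ^ 2 ≤ Ideal.span {c} * I ⊔ Ideal.span {d})
    (n : ℕ) :
    quadraticFiltration I d (n + 1) =
      Ideal.span {c} * quadraticFiltration I d n ⊔
        I ^ ((n + 1) % 2) * Ideal.span {d ^ ((n + 1) / 2)} := by
  have hcI : Ideal.span {c} ≤ I := (Ideal.span_singleton_le_iff_mem I).2 hc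
  have hL : I ^ 2 ⊔ Ideal.span {d} = Ideal.span {c} * I ⊔ Ideal.span {d} :=
    le_antisymm (sup_le hI le_sup_right)
      (sup_le_sup_right (pow_two I ▸ Ideal.mul_mono_left hcI) _)
  rw [← Ideal.span_singleton_pow, quadraticFiltration, quadraticFiltration, hL]
  obtain ⟨k, rfl | rfl⟩ := n.even_or_odd'
  · rw [show (2 * k + 1) % 2 = 1 by omega, show (2 * k + 1) / 2 = k by omega,
      show 2 * k % 2 = 0 by omega, show 2 * k / 2 = k by omega, pow_one, pow_zero, one_mul]
    exact mul_sup_pow_eq hcI hI k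
  · rw [show (2 * k + 1 + 1) % 2 = 0 by omega, show (2 * k + 1 + 1) / 2 = k + 1 by omega,
      show (2 * k + 1) % 2 = 1 by omega, show (2 * k + 1) / 2 = k by omega, pow_one, pow_zero,
      one_mul, one_mul, ← mul_assoc]
    exact sup_pow_succ_eq _ _ k

theorem isSMulRegular_quotient_mul_sup_mul {J K : Ideal R} {e : R} (hx : IsSMulRegular R x)
    (hc : IsSMulRegular (R ⧸ Ideal.span {x}) c) (he : IsSMulRegular (R ⧸ Ideal.span {x, c}) e)
    (hJ : IsSMulRegular (R ⧸ J) x) (hK : IsSMulRegular (R ⧸ K) x) (hcK : c ∈ K) (heJ : e ∈ J) :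
    IsSMulRegular (R ⧸ Ideal.span {c} * J ⊔ K * Ideal.span {e}) x := by
  refine (isSMulRegular_quotient_iff_mem_of_smul_mem _ _).2 fun h hh ↦ ?_
  simp only [Submodule.mem_sup, Ideal.mem_span_singleton_mul, Ideal.mem_mul_span_singleton,
    smul_eq_mul] at hh
  obtain ⟨_, ⟨g, hg, rfl⟩, _, ⟨k, hk, rfl⟩, hgk⟩ := hh
  have hek : e • k ∈ Ideal.span {x, c} :=
    Ideal.mem_span_pair.2 ⟨h, -g, by rw [smul_eq_mul]; linear_combination -hgk⟩
  obtain ⟨u, v, rfl⟩ : ∃ u v, u * x + v * c = k :=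
    Ideal.mem_span_pair.1 (mem_of_isSMulRegular_quotient_of_smul_mem he hek)
  have hu : u ∈ K := mem_of_isSMulRegular_quotient_of_smul_mem hK <| by
    rw [smul_eq_mul, mul_comm]
    exact (add_mem_cancel_right (K.mul_mem_left v hcK)).1 hk
  have hcg : c • (g + v * e) ∈ Ideal.span {x} :=
    Ideal.mem_span_singleton'.2 ⟨h - u * e, by rw [smul_eq_mul]; linear_combination -hgk⟩
  obtain ⟨g', hg'⟩ : ∃ g', g' * x = g + v * e :=
    Ideal.mem_span_singleton'.1 (mem_of_isSMulRegular_quotient_of_smul_mem hc hcg)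
  have hg'J : g' ∈ J := mem_of_isSMulRegular_quotient_of_smul_mem hJ <| by
    rw [smul_eq_mul, mul_comm, hg']
    exact add_mem hg (J.mul_mem_left v heJ)
  have hxh : x • h = x • (c * g' + u * e) := by
    simp only [smul_eq_mul]
    linear_combination -hgk - c * hg'
  rw [hx hxh]
  exact Submodule.add_mem_sup (Ideal.mul_mem_mul (Ideal.mem_span_singleton_self c) hg'J)
    (Ideal.mul_mem_mul hu (Ideal.mem_span_singleton_self e))

theorem isSMulRegular_quotient_quadraticFiltration (hreg : IsWeaklyRegular R [x, c, d])
    (hxI : IsSMulRegular (R ⧸ I) x) (hc : c ∈ I) (hd : d ∈ I)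
    (hI : I ^ 2 ≤ Ideal.span {c} * I ⊔ Ideal.span {d}) (n : ℕ) :
    IsSMulRegular (R ⧸ quadraticFiltration I d n) x := by
  obtain ⟨hx, hcx, hdx⟩ := isWeaklyRegular_triple_iff.1 hreg
  induction n with
  | zero => exact (isSMulRegular_quotient_iff_mem_of_smul_mem _ _).2 (by simp [quadraticFiltration])
  | succ n ih =>
    rw [quadraticFiltration_succ hc hI]
    obtain ⟨hxK, hcK⟩ : IsSMulRegular (R ⧸ I ^ ((n + 1) % 2)) x ∧ c ∈ I ^ ((n + 1) % 2) := by
      rcases Nat.mod_two_eq_zero_or_one (n + 1) with h | h <;> rw [h]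
      · simp [isSMulRegular_quotient_iff_mem_of_smul_mem]
      · rw [pow_one]
        exact ⟨hxI, hc⟩
    exact isSMulRegular_quotient_mul_sup_mul hx hcx (hdx.pow _) ih hxK hcK
      (pow_mem_quadraticFiltration hd n)

end Filtration

section SpaceCurve

variable {R : Type*} [CommRing R]

/-- The ideal of maximal minors of `((x, y, z), (y, z, x * t))`; the space curve of the theorem is
the case `t = x`. -/
def spaceCurveIdeal (x y z t : R) : Ideal R :=
  Ideal.span {z ^ 2 - x * t * y, x ^ 2 * t - y * z, y ^ 2 - x * z}

/-- The generator in degree two of the symbolic Rees algebra of `spaceCurveIdeal x y z t`, obtained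
from `(x ^ 2 * t - y * z) ^ 2 - (z ^ 2 - x * t * y) * (y ^ 2 - x * z)` by dividing by `x`. -/
def spaceCurveElement (x y z t : R) : R :=
  x ^ 3 * t ^ 2 - 3 * x * t * y * z + z ^ 3 + t * y ^ 3

variable (x y z t : R)

theorem minor_mem_spaceCurveIdeal :
    z ^ 2 - x * t * y ∈ spaceCurveIdeal x y z t ∧ x ^ 2 * t - y * z ∈ spaceCurveIdeal x y z t ∧
      y ^ 2 - x * z ∈ spaceCurveIdeal x y z t :=
  ⟨Ideal.subset_span (by simp), Ideal.subset_span (by simp), Ideal.subset_span (by simp)⟩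

theorem spaceCurveElement_mem : spaceCurveElement x y z t ∈ spaceCurveIdeal x y z t := by
  obtain ⟨ha, hb, hc⟩ := minor_mem_spaceCurveIdeal x y z t
  have h : spaceCurveElement x y z t =
      z * (z ^ 2 - x * t * y) + x * t * (x ^ 2 * t - y * z) + y * t * (y ^ 2 - x * z) := by
    unfold spaceCurveElement; ring
  rw [h]
  exact add_mem (add_mem (Ideal.mul_mem_left _ _ ha) (Ideal.mul_mem_left _ _ hb))
    (Ideal.mul_mem_left _ _ hc)

theorem x_mul_spaceCurveElement :
    x * spaceCurveElement x y z t =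
      (x ^ 2 * t - y * z) ^ 2 - (z ^ 2 - x * t * y) * (y ^ 2 - x * z) := by
  unfold spaceCurveElement; ring

theorem y_mul_spaceCurveElement :
    y * spaceCurveElement x y z t =
      t * (y ^ 2 - x * z) ^ 2 - (z ^ 2 - x * t * y) * (x ^ 2 * t - y * z) := by
  unfold spaceCurveElement; ring

theorem z_mul_spaceCurveElement :
    z * spaceCurveElement x y z t =
      (z ^ 2 - x * t * y) ^ 2 - t * ((x ^ 2 * t - y * z) * (y ^ 2 - x * z)) := by
  unfold spaceCurveElement; ring

theorem span_mul_span_spaceCurveElement_le :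
    Ideal.span {x, y, z} * Ideal.span {spaceCurveElement x y z t} ≤
      spaceCurveIdeal x y z t ^ 2 := by
  obtain ⟨ha, hb, hc⟩ := minor_mem_spaceCurveIdeal x y z t
  have hab := Ideal.mul_mem_mul ha hb
  have hac := Ideal.mul_mem_mul ha hc
  have hbc := Ideal.mul_mem_mul hb hc
  rw [← pow_two] at hab hac hbc
  rw [Ideal.span_mul_span', Set.mul_singleton, Ideal.span_le, Set.image_subset_iff]
  rintro w (rfl | rfl | rfl) <;> rw [Set.mem_preimage, SetLike.mem_coe]
  · rw [x_mul_spaceCurveElement]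
    exact sub_mem (Ideal.pow_mem_pow hb 2) hac
  · rw [y_mul_spaceCurveElement]
    exact sub_mem (Ideal.mul_mem_left _ _ (Ideal.pow_mem_pow hc 2)) hab
  · rw [z_mul_spaceCurveElement]
    exact sub_mem (Ideal.pow_mem_pow ha 2) (Ideal.mul_mem_left _ _ hbc)

theorem spaceCurveIdeal_sq_le :
    spaceCurveIdeal x y z t ^ 2 ≤
      Ideal.span {y ^ 2 - x * z} * spaceCurveIdeal x y z t ⊔
        Ideal.span {spaceCurveElement x y z t} := by
  obtain ⟨ha, hb, hc⟩ := minor_mem_spaceCurveIdeal x y z t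
  set K := Ideal.span {y ^ 2 - x * z} * spaceCurveIdeal x y z t ⊔
    Ideal.span {spaceCurveElement x y z t}
  have hcK {f : R} (hf : f ∈ spaceCurveIdeal x y z t) : (y ^ 2 - x * z) * f ∈ K :=
    Ideal.mem_sup_left (Ideal.mul_mem_mul (Ideal.mem_span_singleton_self _) hf)
  have hdK (r : R) : r * spaceCurveElement x y z t ∈ K :=
    Ideal.mem_sup_right (Ideal.mul_mem_left _ _ (Ideal.mem_span_singleton_self _))
  have haa : (z ^ 2 - x * t * y) * (z ^ 2 - x * t * y) ∈ K := by
    convert add_mem (hdK z) (hcK (Ideal.mul_mem_left _ t hb)) using 1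
    linear_combination -z_mul_spaceCurveElement x y z t
  have hab : (z ^ 2 - x * t * y) * (x ^ 2 * t - y * z) ∈ K := by
    convert sub_mem (hcK (Ideal.mul_mem_left _ t hc)) (hdK y) using 1
    linear_combination y_mul_spaceCurveElement x y z t
  have hbb : (x ^ 2 * t - y * z) * (x ^ 2 * t - y * z) ∈ K := by
    convert add_mem (hdK x) (hcK ha) using 1
    linear_combination -x_mul_spaceCurveElement x y z t
  rw [spaceCurveIdeal, pow_two, Ideal.span_mul_span', Ideal.span_le, Set.mul_subset_iff]
  rintro _ (rfl | rfl | rfl) _ (rfl | rfl | rfl)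
  exacts [haa, hab, mul_comm (_ : R) _ ▸ hcK ha, mul_comm (_ : R) _ ▸ hab, hbb,
    mul_comm (_ : R) _ ▸ hcK hb, hcK ha, hcK hb, hcK hc]

variable {x y z t}

theorem isWeaklyRegular_spaceCurveElement (h : IsWeaklyRegular R [x, y, z]) :
    IsWeaklyRegular R [x, y ^ 2 - x * z, spaceCurveElement x y z t] := by
  rw [isWeaklyRegular_cons_iff_quotient] at h ⊢
  obtain ⟨hx, hyz⟩ := h
  let π := Ideal.Quotient.mk (Ideal.span {x})
  have hπx : π x = 0 := Ideal.Quotient.eq_zero_iff_mem.2 (Ideal.mem_span_singleton_self x)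
  have hc : π (y ^ 2 - x * z) = π y ^ 2 := by simp [hπx]
  have hD : π (spaceCurveElement x y z t) = π z ^ 3 + π t * π y * π y ^ 2 := by
    simp only [spaceCurveElement, map_add, map_sub, map_mul, map_pow, hπx]
    ring
  refine ⟨hx, ?_⟩
  change IsWeaklyRegular _ [π _, π _]
  rw [hc, hD]
  exact isWeaklyRegular_pair_add_mul (isWeaklyRegular_pair_pow hyz 2 3) _

theorem isSMulRegular_quotient_spaceCurveIdeal (h : IsWeaklyRegular R [x, y, z]) :
    IsSMulRegular (R ⧸ spaceCurveIdeal x y z t) x := by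
  obtain ⟨ha, hb, hc⟩ := minor_mem_spaceCurveIdeal x y z t
  obtain ⟨hx, hyz⟩ := (isWeaklyRegular_cons_iff_quotient x [y, z]).1 h
  let π := Ideal.Quotient.mk (Ideal.span {x})
  have hπ {f g : R} : π f = π g ↔ ∃ e, f = g + x * e := by
    simp only [π, Ideal.Quotient.mk_eq_mk_iff_sub_mem, Ideal.mem_span_singleton, dvd_def,
      sub_eq_iff_eq_add']
  refine (isSMulRegular_quotient_iff_mem_of_smul_mem _ _).2 fun u hu ↦ ?_
  obtain ⟨s, r, v, hu⟩ : ∃ s r v, x * u =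
      s * (z ^ 2 - x * t * y) + r * (x ^ 2 * t - y * z) + v * (y ^ 2 - x * z) := by
    obtain ⟨s, r, v, hu⟩ := Submodule.mem_span_triple.1 hu
    exact ⟨s, r, v, hu.symm⟩
  -- Modulo `x` the minors are `z ^ 2`, `-y * z`, `y ^ 2`, and every syzygy of these lifts to a
  -- combination of the rows of the matrix.
  have hsyz : π s * π z ^ 2 - π r * (π y * π z) + π v * π y ^ 2 = 0 := by
    simp only [← map_pow, ← map_mul, ← map_sub, ← map_add]
    rw [← map_zero π, hπ]
    exact ⟨u + s * (t * y) - r * (x * t) + v * z, by linear_combination -hu⟩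
  obtain ⟨p, q, hs, hr, hv⟩ := exists_eq_mul_of_syzygy hyz hsyz
  obtain ⟨p, rfl⟩ := Ideal.Quotient.mk_surjective p
  obtain ⟨q, rfl⟩ := Ideal.Quotient.mk_surjective q
  obtain ⟨s', rfl⟩ : ∃ s', s = y * p + x * s' := hπ.1 (by rw [hs, map_mul])
  obtain ⟨r', rfl⟩ : ∃ r', r = z * p + y * q + x * r' :=
    hπ.1 (by rw [hr, map_add, map_mul, map_mul])
  obtain ⟨v', rfl⟩ : ∃ v', v = z * q + x * v' := hπ.1 (by rw [hv, map_mul])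
  have hxu : x • u = x • ((s' - q) * (z ^ 2 - x * t * y) + r' * (x ^ 2 * t - y * z) +
      (v' - p * t) * (y ^ 2 - x * z)) := by
    simp only [smul_eq_mul]
    linear_combination hu
  rw [hx hxu]
  exact add_mem (add_mem (Ideal.mul_mem_left _ _ ha) (Ideal.mul_mem_left _ _ hb))
    (Ideal.mul_mem_left _ _ hc)

theorem radical_spaceCurveIdeal_sup_span :
    (spaceCurveIdeal x y z t ⊔ Ideal.span {x}).radical = (Ideal.span {x, y, z}).radical := by
  set J := spaceCurveIdeal x y z t ⊔ Ideal.span {x}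
  have hx : x ∈ J := Ideal.mem_sup_right (Ideal.mem_span_singleton_self x)
  obtain ⟨ha, -, hc⟩ := minor_mem_spaceCurveIdeal x y z t
  have hy : y ^ 2 ∈ J := by
    simpa using add_mem (Ideal.mem_sup_left hc) (J.mul_mem_right z hx)
  have hz : z ^ 2 ∈ J := by
    simpa using add_mem (Ideal.mem_sup_left ha) (J.mul_mem_right y (J.mul_mem_right t hx))
  refine le_antisymm (Ideal.radical_mono (sup_le ?_ (Ideal.span_mono (by simp)))) ?_
  · rw [spaceCurveIdeal, Ideal.span_le]
    set m := Ideal.span {x, y, z}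
    have hxm : x ∈ m := Ideal.subset_span (by simp)
    have hym : y ∈ m := Ideal.subset_span (by simp)
    have hzm : z ∈ m := Ideal.subset_span (by simp)
    rintro _ (rfl | rfl | rfl)
    exacts [sub_mem (m.pow_mem_of_mem hzm 2 two_pos) (m.mul_mem_left _ hym),
      sub_mem (m.mul_mem_right t (m.pow_mem_of_mem hxm 2 two_pos)) (m.mul_mem_left y hzm),
      sub_mem (m.pow_mem_of_mem hym 2 two_pos) (m.mul_mem_left x hzm)]
  · rw [Ideal.radical_le_radical_iff, Ideal.span_le]
    rintro w (rfl | rfl | rfl)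
    exacts [Ideal.le_radical hx, ⟨2, hy⟩, ⟨2, hz⟩]

end SpaceCurve

theorem symbolic_power_eq_colon_general {R : Type*} [CommRing R] [IsNoetherianRing R]
    [IsLocalRing R] {x y z : R} (hreg : IsWeaklyRegular R [x, y, z])
    (hrad : (Ideal.span {x, y, z}).radical = maximalIdeal R) (t : R) (n : ℕ) :
    IsSMulRegular (R ⧸ (spaceCurveIdeal x y z t ^ n).colon
        ((Ideal.span {x, y, z} ^ (n / 2) : Ideal R) : Set R)) x ∧
      symbolicPower (spaceCurveIdeal x y z t) n =
        (spaceCurveIdeal x y z t ^ n).colon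
          ((Ideal.span {x, y, z} ^ (n / 2) : Ideal R) : Set R) := by
  have hxI := isSMulRegular_quotient_spaceCurveIdeal (t := t) hreg
  have hxJ := isSMulRegular_quotient_quadraticFiltration
    (isWeaklyRegular_spaceCurveElement (t := t) hreg) hxI
    (minor_mem_spaceCurveIdeal x y z t).2.2 (spaceCurveElement_mem x y z t)
    (spaceCurveIdeal_sq_le x y z t) n
  have hle := pow_le_quadraticFiltration (spaceCurveIdeal x y z t) (spaceCurveElement x y z t) n
  have hmul := pow_mul_quadraticFiltration_le (span_mul_span_spaceCurveElement_le x y z t) n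
  have hx : x ∈ Ideal.span {x, y, z} := Ideal.subset_span (by simp)
  rw [colon_pow_eq_of_isSMulRegular hx hle hxJ hmul]
  refine ⟨hxJ, symbolicPower_eq_of_isSMulRegular (k := n / 2) hxI (fun p hp hIp hxp ↦ ?_) hle hxJ
    fun f hf ↦ hmul (Ideal.mul_mem_mul (Ideal.pow_mem_pow hx _) hf)⟩
  exact mem_minimalPrimes_of_notMem_of_radical_sup_eq
    (radical_spaceCurveIdeal_sup_span.trans hrad) hp hIp hxp

/-- Let `R` be a 3-dimensional regular local ring with `m = (x, y, z)` and
`I = (z² - x²y, x³ - yz, y² - xz)`.  For every `n ≥ 1`, with `q = ⌊n/2⌋`, one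
has `depth R/(Iⁿ :_R m^q) > 0` (the maximal ideal contains a nonzerodivisor on
`R/(Iⁿ :_R m^q)`), and hence `I⁽ⁿ⁾ = Iⁿ :_R m^q`. -/
theorem symbolic_power_eq_colon
    {R : Type*} [CommRing R] [IsNoetherianRing R] [IsLocalRing R]
    (hdim : ringKrullDim R = 3)
    (x y z : R) (hreg : maximalIdeal R = Ideal.span {x, y, z})
    (I : Ideal R)
    (hI : I = Ideal.span {z ^ 2 - x ^ 2 * y, x ^ 3 - y * z, y ^ 2 - x * z}) :
    ∀ n : ℕ, 1 ≤ n →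
      (∃ r ∈ maximalIdeal R,
        IsSMulRegular
          (R ⧸ (Submodule.colon ((I ^ n : Ideal R) : Submodule R R)
            ((maximalIdeal R ^ (n / 2) : Ideal R) : Submodule R R))) r) ∧
      symbolicPower I n =
        Submodule.colon ((I ^ n : Ideal R) : Submodule R R)
          ((maximalIdeal R ^ (n / 2) : Ideal R) : Submodule R R) := by
  intro n _
  have hI' : I = spaceCurveIdeal x y z x := by
    rw [hI, spaceCurveIdeal, ← pow_two, ← pow_succ]
  have hreg' : maximalIdeal R = Ideal.ofList [x, y, z] := by
    simp [hreg, Ideal.span_insert]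
  have hxyz : IsWeaklyRegular R [x, y, z] :=
    (isDomain_and_isWeaklyRegular_of_length_le_ringKrullDim hreg' hdim.ge).2
  have hrad : (Ideal.span {x, y, z}).radical = maximalIdeal R := by
    rw [← hreg, (maximalIdeal.isMaximal R).isPrime.radical]
  obtain ⟨hx, hsymb⟩ := symbolic_power_eq_colon_general hxyz hrad x n
  rw [hI', hreg]
  exact ⟨⟨x, Ideal.subset_span (by simp), hx⟩, hsymb⟩
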